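/- Every finite-dimensional simple D^{≥0}-module is one-dimensional and isomorphic to T_{a,c} for a unique pair (a,c) ∈ k^× × k; that is, (a,c) ↦ T_{a,c} induces a bijection from k^× × k onto the set of isomorphism classes of finite-dimensional simple D^{≥0}-modules. -/

import Mathlib

open FreeAlgebra

/-- Generators of the double of the Jordan plane. -/
inductive JGen : Type
  | u | v | zeta | g | ginv | x | y

variable (k : Type) [Field k] [IsAlgClosed k] [CharZero k]

/-- The defining relations of the double of the Jordan plane. -/
inductive JRel : FreeAlgebra k JGen → FreeAlgebra k JGen → Prop
  | gginv : JRel (ι k .g * ι k .ginv) 1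
  | ginvg : JRel (ι k .ginv * ι k .g) 1
  | zg : JRel (ι k .zeta * ι k .g) (ι k .g * ι k .zeta)
  | gx : JRel (ι k .g * ι k .x) (ι k .x * ι k .g)
  | gy : JRel (ι k .g * ι k .y) (ι k .y * ι k .g + ι k .x * ι k .g)
  | zy : JRel (ι k .zeta * ι k .y) (ι k .y * ι k .zeta + ι k .y)
  | zx : JRel (ι k .zeta * ι k .x) (ι k .x * ι k .zeta + ι k .x)
  | ug : JRel (ι k .u * ι k .g) (ι k .g * ι k .u)
  | vg : JRel (ι k .v * ι k .g) (ι k .g * ι k .v + ι k .g * ι k .u)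
  | vz : JRel (ι k .v * ι k .zeta) (ι k .zeta * ι k .v + ι k .v)
  | uz : JRel (ι k .u * ι k .zeta) (ι k .zeta * ι k .u + ι k .u)
  | yx : JRel (ι k .y * ι k .x) (ι k .x * ι k .y - (1/2 : k) • (ι k .x * ι k .x))
  | vu : JRel (ι k .v * ι k .u) (ι k .u * ι k .v - (1/2 : k) • (ι k .u * ι k .u))
  | ux : JRel (ι k .u * ι k .x) (ι k .x * ι k .u)
  | vx : JRel (ι k .v * ι k .x) (ι k .x * ι k .v + (1 - ι k .g) + ι k .x * ι k .u)
  | uy : JRel (ι k .u * ι k .y) (ι k .y * ι k .u + (1 - ι k .g))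
  | vy : JRel (ι k .v * ι k .y) (ι k .y * ι k .v - ι k .g * ι k .zeta + ι k .y * ι k .u)

/-- The double of the Jordan plane, as the presented algebra. -/
def D : Type := RingQuot (JRel k)

noncomputable instance : Ring (D k) := inferInstanceAs (Ring (RingQuot (JRel k)))
noncomputable instance : Algebra k (D k) := inferInstanceAs (Algebra k (RingQuot (JRel k)))

/-- The canonical projection from the free algebra onto `D`. -/
noncomputable def Dmk : FreeAlgebra k JGen →ₐ[k] D k := RingQuot.mkAlgHom k (JRel k)

noncomputable def DU : D k := Dmk k (ι k .u)
noncomputable def DV : D k := Dmk k (ι k .v)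
noncomputable def DZ : D k := Dmk k (ι k .zeta)
noncomputable def DG : D k := Dmk k (ι k .g)
noncomputable def DGinv : D k := Dmk k (ι k .ginv)
noncomputable def DX : D k := Dmk k (ι k .x)
noncomputable def DY : D k := Dmk k (ι k .y)

set_option synthInstance.maxHeartbeats 1000000
set_option maxHeartbeats 2000000

/-- The subalgebra `D^{≥0}` of `D` generated by `g, g⁻¹, ζ, u, v`. -/
noncomputable def Dgeq : Subalgebra k (D k) :=
  Algebra.adjoin k {DG k, DGinv k, DZ k, DU k, DV k}

noncomputable def sG : Dgeq k := ⟨DG k, Algebra.subset_adjoin (by simp)⟩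
noncomputable def sGinv : Dgeq k := ⟨DGinv k, Algebra.subset_adjoin (by simp)⟩
noncomputable def sZ : Dgeq k := ⟨DZ k, Algebra.subset_adjoin (by simp)⟩
noncomputable def sU : Dgeq k := ⟨DU k, Algebra.subset_adjoin (by simp)⟩
noncomputable def sV : Dgeq k := ⟨DV k, Algebra.subset_adjoin (by simp)⟩

/-- The left ideal of `D^{≥0}` generated by `g - a`, `v - b` and `u`
(the annihilator of the generator `x_{a,b}` of the one-dimensional `H`-module `k_{a,b}`). -/
noncomputable def WIdeal (a b : k) : Submodule (Dgeq k) (Dgeq k) :=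
  Submodule.span (Dgeq k)
    {sG k - algebraMap k (Dgeq k) a, sV k - algebraMap k (Dgeq k) b, sU k}

/-- The induced module `W_{a,b} = D^{≥0} ⊗_H k_{a,b}`, realized as the quotient of `D^{≥0}`
by the left ideal `WIdeal a b`. -/
noncomputable abbrev Wmod (a b : k) : Type := (Dgeq k) ⧸ (WIdeal k a b)

/-- The class of `d ∈ D^{≥0}` in `W_{a,b}`; the class of `1` corresponds to `1 ⊗ x_{a,b}`. -/
noncomputable def wmk (a b : k) : Dgeq k → Wmod k a b := Submodule.Quotient.mk
/-- The one-dimensional `D^{≥0}`-module `T_{a,c}`, realized as the quotient of `D^{≥0}` by the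
left ideal generated by `g - a`, `ζ + c/2`, `u`, `v` (the annihilator of the generator
`z_{a,c}`, on which `g` acts by `a`, `ζ` by `-c/2` and `u`, `v` by `0`). -/
noncomputable abbrev Tmod (a c : k) : Type :=
  (Dgeq k) ⧸ (Submodule.span (Dgeq k)
    ({sG k - algebraMap k (Dgeq k) a, sZ k + algebraMap k (Dgeq k) (c / 2), sU k, sV k} :
      Set (Dgeq k)))

/-- The representation space used to realise the Verma modules. -/
abbrev VS (k : Type) : Type := k → k → k

/-- Action of the generators on the (enlarged) Verma module. -/
def vop (a l : k) : JGen → Module.End k (VS k)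
  | .u =>
    { toFun := fun F n s => -2 * F (n + 1) s + (2 + 2 * a) * F (n + 1) (s + 1 / 2)
        - 2 * a * F (n + 1) (s + 1)
      map_add' := by intro F G; funext n s; simp only [Pi.add_apply]; ring
      map_smul' := by
        intro r F; funext n s; simp only [Pi.smul_apply, smul_eq_mul, RingHom.id_apply]; ring }
  | .v =>
    { toFun := fun F n s => (2 * s + 2 - (n + 1)) * F (n + 1) s
        + (-(2 * s + 2 + 2 * a * (s + 2 - l)) + (n + 1) * (2 + 2 * a)) * F (n + 1) (s + 1 / 2)
        + (2 * a * (s + 2 - l) - 3 * a * (n + 1)) * F (n + 1) (s + 1)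
      map_add' := by intro F G; funext n s; simp only [Pi.add_apply]; ring
      map_smul' := by
        intro r F; funext n s; simp only [Pi.smul_apply, smul_eq_mul, RingHom.id_apply]; ring }
  | .zeta =>
    { toFun := fun F n s => (n + l) * F n s
      map_add' := by intro F G; funext n s; simp only [Pi.add_apply]; ring
      map_smul' := by
        intro r F; funext n s; simp only [Pi.smul_apply, smul_eq_mul, RingHom.id_apply]; ring }
  | .g =>
    { toFun := fun F n s => a * F n (s + 1)
      map_add' := by intro F G; funext n s; simp only [Pi.add_apply]; ring
      map_smul' := by
        intro r F; funext n s; simp only [Pi.smul_apply, smul_eq_mul, RingHom.id_apply]; ring }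
  | .ginv =>
    { toFun := fun F n s => a⁻¹ * F n (s - 1)
      map_add' := by intro F G; funext n s; simp only [Pi.add_apply]; ring
      map_smul' := by
        intro r F; funext n s; simp only [Pi.smul_apply, smul_eq_mul, RingHom.id_apply]; ring }
  | .x =>
    { toFun := fun F n s => F (n - 1) s
      map_add' := by intro F G; funext n s; simp only [Pi.add_apply]
      map_smul' := by
        intro r F; funext n s; simp only [Pi.smul_apply, smul_eq_mul, RingHom.id_apply] }
  | .y =>
    { toFun := fun F n s => (s - (n - 1) / 2) * F (n - 1) s
      map_add' := by intro F G; funext n s; simp only [Pi.add_apply]; ring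
      map_smul' := by
        intro r F; funext n s; simp only [Pi.smul_apply, smul_eq_mul, RingHom.id_apply]; ring }

theorem vop_rel (a l : k) (ha : a ≠ 0) ⦃p q : FreeAlgebra k JGen⦄ (h : JRel k p q) :
    FreeAlgebra.lift k (vop k a l) p = FreeAlgebra.lift k (vop k a l) q := by
  have two : (2 : k) ≠ 0 := two_ne_zero
  cases h <;>
  (simp only [map_mul, map_add, map_sub, map_smul, map_one, lift_ι_apply]
   refine LinearMap.ext fun F => ?_
   funext n s
   simp only [vop, Module.End.mul_apply, LinearMap.add_apply, LinearMap.sub_apply,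
     LinearMap.smul_apply, LinearMap.coe_mk, AddHom.coe_mk, Pi.add_apply, Pi.sub_apply,
     Pi.smul_apply, smul_eq_mul, Module.End.one_apply])
  case gginv => rw [add_sub_cancel_right]; field_simp
  case ginvg => rw [sub_add_cancel]; field_simp
  all_goals ring_nf

/-- The representation of `D`. -/
noncomputable def vrep (a l : k) (ha : a ≠ 0) : D k →ₐ[k] Module.End k (VS k) :=
  RingQuot.liftAlgHom k ⟨FreeAlgebra.lift k (vop k a l), vop_rel k a l ha⟩

theorem vrep_mk (a l : k) (ha : a ≠ 0) (i : JGen) :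
    vrep k a l ha (Dmk k (ι k i)) = vop k a l i := by
  have := RingQuot.liftAlgHom_mkAlgHom_apply k (FreeAlgebra.lift k (vop k a l))
    (vop_rel k a l ha) (ι k i)
  rw [lift_ι_apply] at this
  exact this

open Classical in
/-- The highest weight vector. -/
noncomputable def vz : VS k := fun n _ => if n = 0 then 1 else 0

/-- The defining left ideal of `Tmod`. -/
noncomputable def TI (a c : k) : Submodule (Dgeq k) (Dgeq k) :=
  Submodule.span (Dgeq k)
    ({sG k - algebraMap k (Dgeq k) a, sZ k + algebraMap k (Dgeq k) (c / 2), sU k, sV k} :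
      Set (Dgeq k))

theorem TI_le (a c : k) (ha : a ≠ 0) (d : Dgeq k) (hd : d ∈ TI k a c) :
    vrep k a (-(c / 2)) ha d.1 (vz k) = 0 := by
  unfold TI at hd
  induction hd using Submodule.span_induction with
  | mem x hx =>
    simp only [Set.mem_insert_iff, Set.mem_singleton_iff] at hx
    rcases hx with rfl | rfl | rfl | rfl
    · have e : ((sG k - algebraMap k (Dgeq k) a : Dgeq k) : D k)
          = Dmk k (ι k .g) - algebraMap k (D k) a := rfl
      rw [e, map_sub, vrep_mk, AlgHom.commutes]
      funext n s
      simp [vop, vz, Module.algebraMap_end_apply]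
    · have e : ((sZ k + algebraMap k (Dgeq k) (c / 2) : Dgeq k) : D k)
          = Dmk k (ι k .zeta) + algebraMap k (D k) (c / 2) := rfl
      rw [e, map_add, vrep_mk, AlgHom.commutes]
      funext n s
      by_cases hn : n = 0 <;> simp [vop, vz, Module.algebraMap_end_apply, hn]
    · have e : ((sU k : Dgeq k) : D k) = Dmk k (ι k .u) := rfl
      rw [e, vrep_mk]
      funext n s
      by_cases hn : n + 1 = 0 <;> simp [vop, vz, hn]
    · have e : ((sV k : Dgeq k) : D k) = Dmk k (ι k .v) := rfl
      rw [e, vrep_mk]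
      funext n s
      by_cases hn : n + 1 = 0
      · simp [vop, vz, hn]; ring
      · simp [vop, vz, hn]
  | zero => simp
  | add x y _ _ hx hy =>
    rw [Subalgebra.coe_add, map_add, LinearMap.add_apply, hx, hy, add_zero]
  | smul r x _ hx =>
    rw [smul_eq_mul, Subalgebra.coe_mul, map_mul, Module.End.mul_apply, hx, map_zero]

theorem one_notMem_TI (a c : k) (ha : a ≠ 0) : (1 : Dgeq k) ∉ TI k a c := by
  intro h
  have := TI_le k a c ha 1 h
  rw [Subalgebra.coe_one, map_one, Module.End.one_apply] at this
  have := congrFun (congrFun this 0) 0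
  simp [vz] at this

theorem Ginv_mul_G : sGinv k * sG k = 1 :=
  Subtype.ext (by
    have h := RingQuot.mkAlgHom_rel k (JRel.ginvg (k := k))
    rw [map_mul, map_one] at h
    exact h)

theorem Z_mul_G : sZ k * sG k = sG k * sZ k :=
  Subtype.ext (by
    have h := RingQuot.mkAlgHom_rel k (JRel.zg (k := k))
    rw [map_mul, map_mul] at h
    exact h)

theorem V_mul_Z : sV k * sZ k = sZ k * sV k + sV k :=
  Subtype.ext (by
    have h := RingQuot.mkAlgHom_rel k (JRel.vz (k := k))
    rw [map_add, map_mul, map_mul] at h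
    exact h)

theorem U_mul_Z : sU k * sZ k = sZ k * sU k + sU k :=
  Subtype.ext (by
    have h := RingQuot.mkAlgHom_rel k (JRel.uz (k := k))
    rw [map_add, map_mul, map_mul] at h
    exact h)

theorem exists_scalar (a c : k) (ha : a ≠ 0) (d : Dgeq k) :
    ∃ r : k, d - algebraMap k (Dgeq k) r ∈ TI k a c := by
  obtain ⟨d, hd⟩ := d
  induction hd using Algebra.adjoin_induction with
  | mem x hx =>
    have hG : sG k - algebraMap k (Dgeq k) a ∈ TI k a c := Submodule.subset_span (by simp)
    have hZ : sZ k + algebraMap k (Dgeq k) (c / 2) ∈ TI k a c := Submodule.subset_span (by simp)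
    have hU : sU k ∈ TI k a c := Submodule.subset_span (by simp)
    have hV : sV k ∈ TI k a c := Submodule.subset_span (by simp)
    simp only [Set.mem_insert_iff, Set.mem_singleton_iff] at hx
    rcases hx with rfl | rfl | rfl | rfl | rfl
    · exact ⟨a, hG⟩
    · refine ⟨a⁻¹, ?_⟩
      change sGinv k - algebraMap k (Dgeq k) a⁻¹ ∈ TI k a c
      have := (TI k a c).smul_mem (-(algebraMap k (Dgeq k) a⁻¹ * sGinv k)) hG
      convert this using 1
      rw [smul_eq_mul, neg_mul, mul_sub, mul_assoc, Ginv_mul_G, mul_one, mul_assoc,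
        ← Algebra.commutes a (sGinv k), ← mul_assoc, ← map_mul, inv_mul_cancel₀ ha, map_one,
        one_mul, neg_sub]
    · refine ⟨-(c / 2), ?_⟩
      rw [map_neg, sub_neg_eq_add]
      exact hZ
    · refine ⟨0, ?_⟩
      rw [map_zero, sub_zero]
      exact hU
    · refine ⟨0, ?_⟩
      rw [map_zero, sub_zero]
      exact hV
  | algebraMap r =>
    refine ⟨r, ?_⟩
    convert (TI k a c).zero_mem
    exact sub_self (algebraMap k (Dgeq k) r)
  | add x y hx hy h1 h2 =>
    obtain ⟨r, hr⟩ := h1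
    obtain ⟨t, ht⟩ := h2
    refine ⟨r + t, ?_⟩
    have := (TI k a c).add_mem hr ht
    rw [← add_sub_add_comm, ← map_add] at this
    exact this
  | mul x y hx hy h1 h2 =>
    obtain ⟨r, hr⟩ := h1
    obtain ⟨t, ht⟩ := h2
    refine ⟨r * t, ?_⟩
    have := (TI k a c).add_mem ((TI k a c).smul_mem ⟨x, hx⟩ ht)
      ((TI k a c).smul_mem (algebraMap k (Dgeq k) t) hr)
    rw [smul_eq_mul, smul_eq_mul, mul_sub, mul_sub, Algebra.commutes t, sub_add_sub_cancel,
      ← map_mul, mul_comm t r] at this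
    exact this

theorem T_smul (a c : k) (d : Dgeq k) (r : k)
    (h : d - algebraMap k (Dgeq k) r ∈ TI k a c) :
    (Submodule.Quotient.mk d : Tmod k a c) = r • Submodule.Quotient.mk 1 := by
  have : (Submodule.Quotient.mk d : Tmod k a c)
      = Submodule.Quotient.mk (algebraMap k (Dgeq k) r) := (Submodule.Quotient.eq _).2 h
  rw [this]
  exact congrArg Submodule.Quotient.mk (Algebra.algebraMap_eq_smul_one r)

theorem T_one_ne (a c : k) (ha : a ≠ 0) : (Submodule.Quotient.mk 1 : Tmod k a c) ≠ 0 := by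
  intro h
  exact one_notMem_TI k a c ha ((Submodule.Quotient.mk_eq_zero _).1 h)

theorem T_span (a c : k) (ha : a ≠ 0) (m : Tmod k a c) :
    ∃ r : k, r • (Submodule.Quotient.mk 1 : Tmod k a c) = m := by
  obtain ⟨d, rfl⟩ := Submodule.Quotient.mk_surjective _ m
  obtain ⟨r, hr⟩ := exists_scalar k a c ha d
  exact ⟨r, (T_smul k a c d r hr).symm⟩

theorem T_finrank (a c : k) (ha : a ≠ 0) : Module.finrank k (Tmod k a c) = 1 :=
  finrank_eq_one _ (T_one_ne k a c ha) (T_span k a c ha)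

theorem T_simple (a c : k) (ha : a ≠ 0) : IsSimpleModule (Dgeq k) (Tmod k a c) := by
  rw [isSimpleModule_iff_toSpanSingleton_surjective]
  refine ⟨⟨_, 0, T_one_ne k a c ha⟩, ?_⟩
  intro m hm m'
  obtain ⟨r, rfl⟩ := T_span k a c ha m
  obtain ⟨t, rfl⟩ := T_span k a c ha m'
  have hr : r ≠ 0 := by rintro rfl; exact hm (zero_smul _ _)
  refine ⟨algebraMap k (Dgeq k) (t * r⁻¹), ?_⟩
  rw [LinearMap.toSpanSingleton_apply, algebraMap_smul, smul_smul, mul_assoc,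
    inv_mul_cancel₀ hr, mul_one]

theorem T_G (a c : k) (ha : a ≠ 0) (m : Tmod k a c) : sG k • m = a • m := by
  obtain ⟨r, rfl⟩ := T_span k a c ha m
  rw [smul_comm, smul_comm a r, ← Submodule.Quotient.mk_smul, smul_eq_mul, mul_one,
    T_smul k a c (sG k) a (Submodule.subset_span (by simp))]

theorem T_Z (a c : k) (ha : a ≠ 0) (m : Tmod k a c) : sZ k • m = (-(c / 2)) • m := by
  obtain ⟨r, rfl⟩ := T_span k a c ha m
  rw [smul_comm, smul_comm (-(c / 2)) r, ← Submodule.Quotient.mk_smul, smul_eq_mul, mul_one,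
    T_smul k a c (sZ k) (-(c / 2))
      (by rw [map_neg, sub_neg_eq_add]; exact Submodule.subset_span (by simp))]

/-- Action of an element of `Dgeq` as a `k`-linear map. -/
noncomputable def actL (M : Type) [AddCommGroup M] [Module k M] [Module (Dgeq k) M]
    [IsScalarTower k (Dgeq k) M] (d : Dgeq k) : Module.End k M :=
  Algebra.lsmul k k M d

theorem exists_hw (M : Type) [AddCommGroup M] [Module k M] [Module (Dgeq k) M]
    [IsScalarTower k (Dgeq k) M] [FiniteDimensional k M] [Nontrivial M] :
    ∃ (a l : k) (z : M), z ≠ 0 ∧ a ≠ 0 ∧ sG k • z = a • z ∧ sZ k • z = l • z ∧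
      sU k • z = 0 ∧ sV k • z = 0 := by
  let Z : Module.End k M := actL k M (sZ k)
  have hZ : ∀ m, Z m = sZ k • m := fun _ => rfl
  obtain ⟨μ, hμ, hμ'⟩ : ∃ μ, Z.HasEigenvalue μ ∧ ¬ Z.HasEigenvalue (μ - 1) := by
    by_contra! hcon
    obtain ⟨μ, hμ⟩ := Z.exists_eigenvalue
    have hall : ∀ n : ℕ, Z.HasEigenvalue (μ - n) := by
      intro n
      induction n with
      | zero => simpa using hμ
      | succ n ih =>
        have := hcon _ ih
        rwa [sub_sub, ← Nat.cast_succ] at this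
    have hinj : Function.Injective (fun n : ℕ => μ - (n : k)) := by
      intro m n h
      simpa using h
    exact Set.infinite_of_injective_forall_mem hinj hall (Module.End.finite_hasEigenvalue Z)
  have hbot : Z.eigenspace (μ - 1) = ⊥ := by
    by_contra h
    exact hμ' h
  have hlow : ∀ (w : Dgeq k), w * sZ k = sZ k * w + w → ∀ m ∈ Z.eigenspace μ, w • m = 0 := by
    intro w hw m hm
    rw [Module.End.mem_eigenspace_iff, hZ] at hm
    have h1 : w • m ∈ Z.eigenspace (μ - 1) := by
      rw [Module.End.mem_eigenspace_iff, hZ, ← mul_smul, eq_sub_of_add_eq hw.symm, sub_smul,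
        mul_smul, hm, smul_comm, sub_smul, one_smul]
    rwa [hbot, Submodule.mem_bot] at h1
  let G : Module.End k M := actL k M (sG k)
  have hG : ∀ m ∈ Z.eigenspace μ, G m ∈ Z.eigenspace μ := by
    intro m hm
    rw [Module.End.mem_eigenspace_iff, hZ] at hm ⊢
    change sZ k • sG k • m = μ • sG k • m
    rw [← mul_smul, Z_mul_G, mul_smul, hm, smul_comm]
  have : Nontrivial (Z.eigenspace μ) := Submodule.nontrivial_iff_ne_bot.2 hμ
  obtain ⟨a, ha⟩ := Module.End.exists_eigenvalue (G.restrict hG)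
  obtain ⟨⟨z, hz⟩, hza⟩ := ha.exists_hasEigenvector
  have hz0 : z ≠ 0 := fun h => hza.2 (Subtype.ext h)
  have hGz : sG k • z = a • z := congrArg Subtype.val hza.apply_eq_smul
  refine ⟨a, μ, z, hz0, ?_, hGz, ?_, hlow _ (U_mul_Z k) z hz, hlow _ (V_mul_Z k) z hz⟩
  · rintro rfl
    rw [zero_smul] at hGz
    apply hz0
    rw [← one_smul (Dgeq k) z, ← Ginv_mul_G, mul_smul, hGz, smul_zero]
  · exact Module.End.mem_eigenspace_iff.1 hz

theorem exists_equiv (M : Type) [AddCommGroup M] [Module k M] [Module (Dgeq k) M]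
    [IsScalarTower k (Dgeq k) M] [FiniteDimensional k M] [IsSimpleModule (Dgeq k) M] :
    ∃ a c : k, a ≠ 0 ∧ Nonempty (M ≃ₗ[Dgeq k] Tmod k a c) := by
  have := IsSimpleModule.nontrivial (Dgeq k) M
  obtain ⟨a, l, z, hz, ha, hG, hZ, hU, hV⟩ := exists_hw k M
  refine ⟨a, -(2 * l), ha, ?_⟩
  have hle : TI k a (-(2 * l)) ≤ LinearMap.ker (LinearMap.toSpanSingleton (Dgeq k) M z) := by
    refine Submodule.span_le.2 ?_
    intro x hx
    simp only [Set.mem_insert_iff, Set.mem_singleton_iff] at hx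
    rw [SetLike.mem_coe, LinearMap.mem_ker, LinearMap.toSpanSingleton_apply]
    rcases hx with rfl | rfl | rfl | rfl
    · rw [sub_smul, algebraMap_smul, hG, sub_self]
    · rw [add_smul, algebraMap_smul, hZ, ← add_smul]
      have : l + -(2 * l) / 2 = 0 := by field_simp; ring
      rw [this, zero_smul]
    · exact hU
    · exact hV
  let f : Tmod k a (-(2 * l)) →ₗ[Dgeq k] M := Submodule.liftQ _ _ hle
  have hf : f ≠ 0 := by
    intro h
    have h1 : f (Submodule.Quotient.mk 1) = (1 : Dgeq k) • z := rfl
    rw [h, one_smul] at h1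
    exact hz h1.symm
  have := T_simple k a (-(2 * l)) ha
  exact ⟨(LinearEquiv.ofBijective f (LinearMap.bijective_of_ne_zero hf)).symm⟩

/-- every finite-dimensional simple `D^{≥0}`-module is one-dimensional and
isomorphic to `T_{a,c}` for a unique pair `(a,c) ∈ k^× × k`; that is, `(a,c) ↦ T_{a,c}` induces
a bijection from `k^× × k` onto the set of isomorphism classes of finite-dimensional simple
`D^{≥0}`-modules. -/
theorem irrep_Dgeq_classification :
    (∀ a c : k, a ≠ 0 →
      IsSimpleModule (Dgeq k) (Tmod k a c) ∧ Module.finrank k (Tmod k a c) = 1) ∧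
    (∀ (M : Type) (_ : AddCommGroup M) (_ : Module k M) (_ : Module (Dgeq k) M)
        (_ : IsScalarTower k (Dgeq k) M) (_ : FiniteDimensional k M),
      IsSimpleModule (Dgeq k) M →
        (Module.finrank k M = 1 ∧
          ∃! p : k × k, p.1 ≠ 0 ∧ Nonempty (M ≃ₗ[Dgeq k] Tmod k p.1 p.2))) := by
  refine ⟨fun a c ha => ⟨T_simple k a c ha, T_finrank k a c ha⟩, ?_⟩
  intro M _ _ _ _ _ _
  obtain ⟨a, c, ha, ⟨e⟩⟩ := exists_equiv k M
  have := IsSimpleModule.nontrivial (Dgeq k) M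
  refine ⟨?_, (a, c), ⟨ha, ⟨e⟩⟩, ?_⟩
  · rw [(e.restrictScalars k).finrank_eq, T_finrank k a c ha]
  · rintro ⟨a', c'⟩ ⟨ha', ⟨e'⟩⟩
    obtain ⟨m, hm⟩ := exists_ne (0 : M)
    have key : ∀ (b d : k), b ≠ 0 → (M ≃ₗ[Dgeq k] Tmod k b d) →
        sG k • m = b • m ∧ sZ k • m = (-(d / 2)) • m := by
      intro b d hb f
      constructor
      · apply f.injective
        rw [map_smul, T_G k b d hb]
        exact ((f.restrictScalars k).map_smul b m).symm
      · apply f.injective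
        rw [map_smul, T_Z k b d hb]
        exact ((f.restrictScalars k).map_smul _ m).symm
    obtain ⟨h1, h2⟩ := key a c ha e
    obtain ⟨h3, h4⟩ := key a' c' ha' e'
    have e1 := smul_left_injective k hm (h3.symm.trans h1)
    have e2 := smul_left_injective k hm (h4.symm.trans h2)
    have e3 : c' = c := by
      have := neg_injective e2
      field_simp at this
      exact this
    exact Prod.ext e1 e3
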